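/- For any X5-interpretation ⟨H,T⟩ and any program Π: ⟨H,T⟩ satisfies every rule of Π if and only if H is a model of the reduct Π^T and T is a model of Π. -/

import Mathlib

open scoped Classical

namespace X5Paper

/-- Explicit literals: an atom `p` or its explicit negation `∼p`. -/
inductive XLit (At : Type) : Type
  | pos : At → XLit At
  | neg : At → XLit At

/-- A set of explicit literals is consistent if it contains no atom together
with its explicit negation. -/
def Consistent {At : Type} (T : Set (XLit At)) : Prop :=
  ∀ p : At, ¬ (XLit.pos p ∈ T ∧ XLit.neg p ∈ T)

/-- Nested expressions: ⊤, ⊥, atoms, ∧, ∨, default negation ¬, explicit negation ∼. -/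
inductive NExp (At : Type) : Type
  | top : NExp At
  | bot : NExp At
  | atom : At → NExp At
  | conj : NExp At → NExp At → NExp At
  | disj : NExp At → NExp At → NExp At
  | dneg : NExp At → NExp At
  | xneg : NExp At → NExp At

variable {At : Type}

mutual
/-- Satisfaction `T ⊨ F` of a nested expression by a set of explicit literals. -/
def NExp.sat (T : Set (XLit At)) : NExp At → Prop
  | .top => True
  | .bot => False
  | .atom p => XLit.pos p ∈ T
  | .conj F G => NExp.sat T F ∧ NExp.sat T G
  | .disj F G => NExp.sat T F ∨ NExp.sat T G
  | .dneg F => ¬ NExp.sat T F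
  | .xneg F => NExp.fals T F

/-- Falsification `T ⫤ F` of a nested expression by a set of explicit literals. -/
def NExp.fals (T : Set (XLit At)) : NExp At → Prop
  | .top => False
  | .bot => True
  | .atom p => XLit.neg p ∈ T
  | .conj F G => NExp.fals T F ∨ NExp.fals T G
  | .disj F G => NExp.fals T F ∧ NExp.fals T G
  | .dneg F => NExp.sat T F
  | .xneg F => NExp.sat T F
end

/-- The reduct `F^T` of a nested expression. -/
noncomputable def NExp.reduct (T : Set (XLit At)) : NExp At → NExp At
  | .top => .top
  | .bot => .bot
  | .atom p => .atom p
  | .conj F G => .conj (NExp.reduct T F) (NExp.reduct T G)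
  | .disj F G => .disj (NExp.reduct T F) (NExp.reduct T G)
  | .dneg F => if NExp.sat T F then .bot else .top
  | .xneg F => .xneg (NExp.reduct T F)

/-- Formulas: atoms, ⊥, ∧, ∨, →, explicit negation ∼. -/
inductive Frm (At : Type) : Type
  | atom : At → Frm At
  | bot : Frm At
  | conj : Frm At → Frm At → Frm At
  | disj : Frm At → Frm At → Frm At
  | impl : Frm At → Frm At → Frm At
  | xneg : Frm At → Frm At

/-- Default negation `¬φ := φ → ⊥`. -/
def Frm.neg (φ : Frm At) : Frm At := Frm.impl φ Frm.bot

/-- `⊤ := ¬⊥`. -/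
def Frm.top : Frm At := Frm.neg Frm.bot

/-- Weak equivalence `φ ↔ ψ := (φ→ψ) ∧ (ψ→φ)`. -/
def Frm.iff (φ ψ : Frm At) : Frm At := Frm.conj (Frm.impl φ ψ) (Frm.impl ψ φ)

/-- Strong equivalence connective `φ ⇔ ψ := (φ↔ψ) ∧ (∼φ↔∼ψ)`. -/
def Frm.siff (φ ψ : Frm At) : Frm At :=
  Frm.conj (Frm.iff φ ψ) (Frm.iff (Frm.xneg φ) (Frm.xneg ψ))

mutual
/-- X5 satisfaction `⟨H,T⟩ ⊨ φ`. -/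
def Sat : Set (XLit At) → Set (XLit At) → Frm At → Prop
  | H, _, .atom p => XLit.pos p ∈ H
  | _, _, .bot => False
  | H, T, .conj φ ψ => Sat H T φ ∧ Sat H T ψ
  | H, T, .disj φ ψ => Sat H T φ ∨ Sat H T ψ
  | H, T, .impl φ ψ => (Sat H T φ → Sat H T ψ) ∧ (Sat T T φ → Sat T T ψ)
  | H, T, .xneg φ => Fals H T φ

/-- X5 falsification `⟨H,T⟩ ⫤ φ`. -/
def Fals : Set (XLit At) → Set (XLit At) → Frm At → Prop
  | H, _, .atom p => XLit.neg p ∈ H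
  | _, _, .bot => True
  | H, T, .conj φ ψ => Fals H T φ ∨ Fals H T ψ
  | H, T, .disj φ ψ => Fals H T φ ∧ Fals H T ψ
  | H, T, .impl φ ψ => Sat T T φ ∧ Fals H T ψ
  | H, T, .xneg φ => Sat H T φ
end

/-- X5 validity: satisfied by every X5-interpretation `⟨H,T⟩`. -/
def X5Valid (φ : Frm At) : Prop :=
  ∀ H T : Set (XLit At), Consistent H → Consistent T → H ⊆ T → Sat H T φ

/-- Nested expressions viewed as formulas (`¬F := F → ⊥`, `⊤ := ¬⊥`). -/
def NExp.toFrm : NExp At → Frm At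
  | .top => Frm.top
  | .bot => .bot
  | .atom p => .atom p
  | .conj F G => .conj F.toFrm G.toFrm
  | .disj F G => .disj F.toFrm G.toFrm
  | .dneg F => Frm.neg F.toFrm
  | .xneg F => .xneg F.toFrm

/-- Uniform substitution `φ[α/p]`. -/
noncomputable def Frm.subst (p : At) (α : Frm At) : Frm At → Frm At
  | .atom q => if q = p then α else .atom q
  | .bot => .bot
  | .conj φ ψ => .conj (Frm.subst p α φ) (Frm.subst p α ψ)
  | .disj φ ψ => .disj (Frm.subst p α φ) (Frm.subst p α ψ)
  | .impl φ ψ => .impl (Frm.subst p α φ) (Frm.subst p α ψ)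
  | .xneg φ => .xneg (Frm.subst p α φ)

/-- A formula contains no explicit negation. -/
def NoXneg : Frm At → Prop
  | .atom _ => True
  | .bot => True
  | .conj φ ψ => NoXneg φ ∧ NoXneg ψ
  | .disj φ ψ => NoXneg φ ∧ NoXneg ψ
  | .impl φ ψ => NoXneg φ ∧ NoXneg ψ
  | .xneg _ => False

/-- HT satisfaction for (∼-free) formulas; the `∼` clause is a dummy. -/
def HTSat : Set At → Set At → Frm At → Prop
  | H, _, .atom p => p ∈ H
  | _, _, .bot => False
  | H, T, .conj φ ψ => HTSat H T φ ∧ HTSat H T ψ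
  | H, T, .disj φ ψ => HTSat H T φ ∨ HTSat H T ψ
  | H, T, .impl φ ψ => (HTSat H T φ → HTSat H T ψ) ∧ (HTSat T T φ → HTSat T T ψ)
  | _, _, .xneg _ => False

/-- HT validity for ∼-free formulas. -/
def HTValid (φ : Frm At) : Prop :=
  ∀ H T : Set At, H ⊆ T → HTSat H T φ

/-- Atom `p` occurs in a formula. -/
def Frm.occurs (p : At) : Frm At → Prop
  | .atom q => q = p
  | .bot => False
  | .conj φ ψ => Frm.occurs p φ ∨ Frm.occurs p ψ
  | .disj φ ψ => Frm.occurs p φ ∨ Frm.occurs p ψ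
  | .impl φ ψ => Frm.occurs p φ ∨ Frm.occurs p ψ
  | .xneg φ => Frm.occurs p φ

/-- Atom `p` occurs only outside the scope of explicit negation `∼`. -/
def OutsideXneg (p : At) : Frm At → Prop
  | .atom _ => True
  | .bot => True
  | .conj φ ψ => OutsideXneg p φ ∧ OutsideXneg p ψ
  | .disj φ ψ => OutsideXneg p φ ∧ OutsideXneg p ψ
  | .impl φ ψ => OutsideXneg p φ ∧ OutsideXneg p ψ
  | .xneg φ => ¬ Frm.occurs p φ

/-- A rule `F → G` of a program. -/
abbrev Rule (At : Type) := NExp At × NExp At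

/-- `T` is a model of a program: it satisfies the head whenever it satisfies the body. -/
def NModels (T : Set (XLit At)) (Prog : Set (Rule At)) : Prop :=
  ∀ r ∈ Prog, NExp.sat T r.1 → NExp.sat T r.2

/-- The reduct `Π^T` of a program. -/
noncomputable def progReduct (T : Set (XLit At)) (Prog : Set (Rule At)) : Set (Rule At) :=
  (fun r : Rule At => (NExp.reduct T r.1, NExp.reduct T r.2)) '' Prog

/-- `T` is an answer set of `Π`: a ⊆-minimal (consistent) model of the reduct `Π^T`. -/
def AnswerSet (Prog : Set (Rule At)) (T : Set (XLit At)) : Prop :=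
  Consistent T ∧ NModels T (progReduct T Prog) ∧
    ∀ T' : Set (XLit At), Consistent T' → T' ⊆ T → NModels T' (progReduct T Prog) → T' = T

/-- The theory corresponding to a program: each rule `F → G` read as an implication. -/
def ruleTheory (Prog : Set (Rule At)) : Set (Frm At) :=
  (fun r : Rule At => Frm.impl r.1.toFrm r.2.toFrm) '' Prog

/-- `⟨T,T⟩` is an equilibrium model of the theory `Γ`. -/
def EqModel (Γ : Set (Frm At)) (T : Set (XLit At)) : Prop :=
  Consistent T ∧ (∀ φ ∈ Γ, Sat T T φ) ∧
    ¬ ∃ H : Set (XLit At), Consistent H ∧ H ⊂ T ∧ ∀ φ ∈ Γ, Sat H T φ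

mutual
/-- Generalized Ferraris reduct `φ^T₊` of a formula (a nested expression). -/
noncomputable def redPos (T : Set (XLit At)) : Frm At → NExp At
  | .atom p => if XLit.pos p ∈ T then .atom p else .bot
  | .bot => .bot
  | .conj α β => if Sat T T (Frm.conj α β) then .conj (redPos T α) (redPos T β) else .bot
  | .disj α β => if Sat T T (Frm.disj α β) then .disj (redPos T α) (redPos T β) else .bot
  | .impl α β => if Sat T T (Frm.impl α β) then .disj (.dneg (redPos T α)) (redPos T β) else .bot
  | .xneg α => if Sat T T (Frm.xneg α) then .xneg (redNeg T α) else .bot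

/-- Generalized Ferraris reduct `φ^T₋` of a formula (a nested expression). -/
noncomputable def redNeg (T : Set (XLit At)) : Frm At → NExp At
  | .atom p => if XLit.neg p ∈ T then .atom p else .top
  | .bot => .bot
  | .conj α β => if Fals T T (Frm.conj α β) then .conj (redNeg T α) (redNeg T β) else .top
  | .disj α β => if Fals T T (Frm.disj α β) then .disj (redNeg T α) (redNeg T β) else .top
  | .impl α β => if Fals T T (Frm.impl α β) then redNeg T β else .top
  | .xneg α => if Fals T T (Frm.xneg α) then .xneg (redPos T α) else .top
end

mutual
/-- Generalized Ferraris reduct `F^T₊` of a nested expression. -/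
noncomputable def nRedPos (T : Set (XLit At)) : NExp At → NExp At
  | .top => .top
  | .bot => .bot
  | .atom p => if XLit.pos p ∈ T then .atom p else .bot
  | .conj α β => if NExp.sat T (NExp.conj α β) then .conj (nRedPos T α) (nRedPos T β) else .bot
  | .disj α β => if NExp.sat T (NExp.disj α β) then .disj (nRedPos T α) (nRedPos T β) else .bot
  | .dneg α => if NExp.sat T (NExp.dneg α) then .dneg (nRedPos T α) else .bot
  | .xneg α => if NExp.sat T (NExp.xneg α) then .xneg (nRedNeg T α) else .bot

/-- Generalized Ferraris reduct `F^T₋` of a nested expression. -/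
noncomputable def nRedNeg (T : Set (XLit At)) : NExp At → NExp At
  | .top => .top
  | .bot => .bot
  | .atom p => if XLit.neg p ∈ T then .atom p else .top
  | .conj α β => if NExp.fals T (NExp.conj α β) then .conj (nRedNeg T α) (nRedNeg T β) else .top
  | .disj α β => if NExp.fals T (NExp.disj α β) then .disj (nRedNeg T α) (nRedNeg T β) else .top
  | .dneg α => if NExp.fals T (NExp.dneg α) then .bot else .top
  | .xneg α => if NExp.fals T (NExp.xneg α) then .xneg (nRedPos T α) else .top
end

/-- The five-valued valuation `M(φ)` of `M = ⟨H,T⟩`. -/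
noncomputable def val (H T : Set (XLit At)) : Frm At → ℤ
  | .atom p =>
      if XLit.pos p ∈ H then 2
      else if XLit.neg p ∈ H then -2
      else if XLit.pos p ∈ T then 1
      else if XLit.neg p ∈ T then -1
      else 0
  | .bot => -2
  | .conj φ ψ => min (val H T φ) (val H T ψ)
  | .disj φ ψ => max (val H T φ) (val H T ψ)
  | .impl φ ψ => if val H T φ ≤ max (val H T ψ) 0 then 2 else val H T ψ
  | .xneg φ => - val H T φ


theorem aux_total (T : Set (XLit At)) (F : NExp At) :
    (Sat T T F.toFrm ↔ NExp.sat T F) ∧ (Fals T T F.toFrm ↔ NExp.fals T F) := by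
  induction F <;>
    simp_all [NExp.toFrm, Frm.top, Frm.neg, Sat, Fals, NExp.sat, NExp.fals]

theorem aux_persist (H T : Set (XLit At)) (hsub : H ⊆ T) (F : NExp At) :
    (Sat H T F.toFrm → Sat T T F.toFrm) ∧ (Fals H T F.toFrm → Fals T T F.toFrm) := by
  induction F with
  | atom p =>
    simp only [NExp.toFrm, Sat, Fals]
    exact ⟨fun h => hsub h, fun h => hsub h⟩
  | _ => simp only [NExp.toFrm, Frm.top, Frm.neg, Sat, Fals]; tauto

theorem aux_reduct (H T : Set (XLit At)) (hsub : H ⊆ T) (F : NExp At) :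
    (Sat H T F.toFrm ↔ NExp.sat H (NExp.reduct T F)) ∧
      (Fals H T F.toFrm ↔ NExp.fals H (NExp.reduct T F)) := by
  induction F with
  | dneg F ih =>
    have h1 := (aux_total T F).1
    have h2 := (aux_persist H T hsub F).1
    by_cases h : NExp.sat T F
    · simp only [NExp.toFrm, Frm.neg, Sat, Fals, NExp.reduct, if_pos h, NExp.sat, NExp.fals]
      tauto
    · simp only [NExp.toFrm, Frm.neg, Sat, Fals, NExp.reduct, if_neg h, NExp.sat, NExp.fals]
      tauto
  | _ => simp_all [NExp.toFrm, Frm.top, Frm.neg, Sat, Fals, NExp.sat, NExp.fals, NExp.reduct]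

/-- `⟨H,T⟩` satisfies every rule of the program `Prog` iff
`H` is a model of the reduct `Prog^T` and `T` is a model of `Prog`. -/
theorem stmt6 (At : Type) (H T : Set (XLit At))
    (hH : Consistent H) (hT : Consistent T) (hsub : H ⊆ T)
    (Prog : Set (Rule At)) :
    (∀ r ∈ Prog, Sat H T (Frm.impl r.1.toFrm r.2.toFrm)) ↔
      (NModels H (progReduct T Prog) ∧ NModels T Prog) := by
  simp only [NModels, progReduct, Set.forall_mem_image, Sat, (aux_total T _).1,
    (aux_reduct H T hsub _).1]
  exact ⟨fun h => ⟨fun r hr => (h r hr).1, fun r hr => (h r hr).2⟩,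
    fun h r hr => ⟨h.1 hr, h.2 r hr⟩⟩

end X5Paper
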